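/- arXiv:2404.01610 — 2 statements merged into one kernel-verified Lean document; each statement's English description precedes it below -/
import Mathlib

section
/- (Global existence for the first flow) Let ρ > 0 and let h : V → ℝ change sign with max_{x∈V} h(x) > 0. For any initial function u₀ : V → ℝ with ∫_V h e^{u₀} dμ ≠ 0, there exists a unique function u : V × [0, +∞) → ℝ, differentiable in t, with ∫_V h e^{u(·,t)} dμ ≠ 0 for all t ≥ 0, such that ∂_t e^{u(x,t)} = −Lu(x,t) + ρ( h(x)e^{u(x,t)} / ∫_V h e^{u(·,t)} dμ − 1/|V| ) for all (x,t) ∈ V × (0, +∞) and u(x,0) = u₀(x) for all x ∈ V. -/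
open Real Finset

variable {V : Type*}

/-- Discrete integral: `∫_V f dμ = Σ_x μ(x) f(x)`. -/
noncomputable def intV [Fintype V] (μ f : V → ℝ) : ℝ := ∑ x, μ x * f x

/-- Volume `|V| = Σ_x μ(x)`. -/
noncomputable def volV [Fintype V] (μ : V → ℝ) : ℝ := ∑ x, μ x

/-- The nonlocal (fractional graph Laplacian type) operator
`Lu(x) = (1/μ(x)) Σ_{y ≠ x} W(x,y)(u(x) − u(y))`. -/
noncomputable def opL [Fintype V] [DecidableEq V] (μ : V → ℝ) (W : V → V → ℝ)
    (u : V → ℝ) (x : V) : ℝ :=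
  (1 / μ x) * ∑ y ∈ univ.filter (fun y => y ≠ x), W x y * (u x - u y)

/-- Gradient form `∇u·∇v(x) = (1/(2μ(x))) Σ_{y ≠ x} W(x,y)(u(x)−u(y))(v(x)−v(y))`. -/
noncomputable def gradForm [Fintype V] [DecidableEq V] (μ : V → ℝ) (W : V → V → ℝ)
    (u v : V → ℝ) (x : V) : ℝ :=
  (1 / (2 * μ x)) * ∑ y ∈ univ.filter (fun y => y ≠ x), W x y * (u x - u y) * (v x - v y)

/-- `|∇u|²(x) = ∇u·∇u(x)`. -/
noncomputable def gradSq [Fintype V] [DecidableEq V] (μ : V → ℝ) (W : V → V → ℝ)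
    (u : V → ℝ) (x : V) : ℝ := gradForm μ W u u x

/-!
In the coordinate `u` the flow is the ordinary differential equation `u' = e^{-u} R(u)`, where `R`,
the velocity of `e^u`, is the negative `L²(μ)`-gradient of the mean field functional `J`. Hence `J`
decreases along solutions, at the rate `∫_V e^{-u} R² dμ`, while the mass `∫_V e^u dμ` is conserved.

The Dirichlet energy controls the oscillation of `u` on a finite set, whereas the other terms of `J`
are at worst linear in the oscillation, so `J` bounds the oscillation; the mass then fixes the
additive constant. Therefore `J + (log ∫_V e^u dμ)²` has compact sublevel sets in the open set
`{∫_V h e^u dμ ≠ 0}`, the logarithm in `J` keeping them away from its boundary. Multiplying the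
field by a cutoff equal to `1` on the sublevel set of `u₀` makes it globally Lipschitz without
changing the forward solutions that start at `u₀`.
-/

section LyapunovFlow

open Set Topology

open scoped Manifold NNReal

variable {E : Type*} [NormedAddCommGroup E] [NormedSpace ℝ E]

lemma exists_isIntegralCurve_of_lipschitzWith [CompleteSpace E] {X : E → E} {k : ℝ≥0}
    (hX : ContDiff ℝ 1 X) (hk : LipschitzWith k X) (x₀ : E) :
    ∃ γ : ℝ → E, γ 0 = x₀ ∧ IsIntegralCurve γ fun _ ↦ X := by
  have hsec : CMDiff 1 (fun x ↦ (⟨x, X x⟩ : TangentBundle 𝓘(ℝ, E) E)) :=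
    contMDiff_vectorSpace_iff_contDiff.2 hX
  have hε : (0 : ℝ) < 1 / (k + 1) := by positivity
  -- On the ball of radius `‖X x‖` about `x` the field is bounded by `(k + 1) * ‖X x‖`, so the
  -- Picard–Lindelöf time `1 / (k + 1)` does not depend on `x`.
  have hloc (x : E) : ∃ γ : ℝ → E, γ 0 = x ∧
      IsMIntegralCurveOn (I := 𝓘(ℝ, E)) γ X (Ioo (-(1 / (k + 1))) (1 / (k + 1))) := by
    have hpl : IsPicardLindelof (fun _ ↦ X) (tmin := -(1 / (k + 1))) (tmax := 1 / (k + 1))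
        ⟨0, neg_nonpos.2 hε.le, hε.le⟩ x ‖X x‖₊ 0 ((k + 1) * ‖X x‖₊) k := by
      refine .of_time_independent (fun y hy ↦ ?_) hk.lipschitzOnWith ?_
      · calc ‖X y‖ ≤ ‖X y - X x‖ + ‖X x‖ := norm_le_norm_sub_add _ _
          _ ≤ k * ‖X x‖ + ‖X x‖ := by
            grw [hk.norm_sub_le, mem_closedBall_iff_norm.1 hy, coe_nnnorm]
          _ = _ := by push_cast; ring
      · have : (k : ℝ) + 1 ≠ 0 := by positivity
        simp [field]
    obtain ⟨γ, hγ₀, hγ⟩ := hpl.exists_eq_forall_mem_Icc_hasDerivWithinAt₀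
    refine ⟨γ, hγ₀, fun t ht ↦ ?_⟩
    have hderiv := (hγ t (Ioo_subset_Icc_self ht)).mono Ioo_subset_Icc_self
    exact hderiv.hasFDerivWithinAt.hasMFDerivWithinAt
  obtain ⟨γ, hγ₀, hγ⟩ := exists_isMIntegralCurve_of_isMIntegralCurveOn hsec hε hloc x₀
  refine ⟨γ, hγ₀, fun t ↦ ?_⟩
  have hderiv : HasFDerivAt γ ((1 : ℝ →L[ℝ] ℝ).smulRight (X (γ t))) t := (hγ t).hasFDerivAt
  simpa using hderiv.hasDerivAt

variable {Ω : Set E} {U : E → E} {F : E → ℝ}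

lemma exists_cutoff_smul_contDiff [FiniteDimensional ℝ E] {K : Set E} (hΩ : IsOpen Ω)
    (hK : IsCompact K) (hKΩ : K ⊆ Ω) (hU : ContDiffOn ℝ 1 U Ω) :
    ∃ f : E → ℝ, (∀ x, 0 ≤ f x) ∧ (∀ x ∈ K, f x = 1) ∧
      ContDiff ℝ 1 (fun x ↦ f x • U x) ∧ HasCompactSupport (fun x ↦ f x • U x) := by
  obtain ⟨L, hL, hKL, hLΩ⟩ := exists_compact_between hK hΩ hKΩ
  obtain ⟨f, hfK, hfL, hf⟩ := exists_contMDiffMap_one_nhds_of_subset_interior (n := 1)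
    𝓘(ℝ, E) hK.isClosed hKL
  have hfU (x : E) (hx : x ∉ L) : f x • U x = 0 := by rw [hfL x hx, zero_smul]
  refine ⟨f, fun x ↦ (hf x).1, fun x hx ↦ hfK.self_of_nhdsSet x hx,
    contDiff_iff_contDiffAt.2 fun x ↦ ?_, HasCompactSupport.intro hL hfU⟩
  by_cases hx : x ∈ L
  · exact f.contMDiff.contDiff.contDiffAt.smul (hU.contDiffAt (hΩ.mem_nhds (hLΩ hx)))
  · exact contDiffAt_const.congr_of_eventuallyEq
      (Filter.eventually_of_mem (hL.isClosed.isOpen_compl.mem_nhds hx) hfU)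

lemma lyapunov_le_of_hasDerivAt {γ : ℝ → E} {c : ℝ → ℝ} {a b : ℝ}
    (hF : ∀ x ∈ Ω, DifferentiableAt ℝ F x) (hFU : ∀ x ∈ Ω, lineDeriv ℝ F x (U x) ≤ 0)
    (hc : ∀ t, 0 ≤ c t) (hab : a ≤ b) (hγΩ : ∀ t ∈ Icc a b, γ t ∈ Ω)
    (hγ : ∀ t ∈ Icc a b, HasDerivAt γ (c t • U (γ t)) t) : F (γ b) ≤ F (γ a) := by
  have hderiv : ∀ t ∈ Icc a b,
      HasDerivAt (F ∘ γ) (c t * lineDeriv ℝ F (γ t) (U (γ t))) t := fun t ht ↦ by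
    have hFγ := hF _ (hγΩ t ht)
    simpa [hFγ.lineDeriv_eq_fderiv] using hFγ.hasFDerivAt.comp_hasDerivAt t (hγ t ht)
  refine antitoneOn_of_hasDerivWithinAt_nonpos (convex_Icc a b) (HasDerivAt.continuousOn hderiv)
    (fun t ht ↦ (hderiv t (interior_subset ht)).hasDerivWithinAt) (fun t ht ↦ ?_)
    (left_mem_Icc.2 hab) (right_mem_Icc.2 hab) hab
  exact mul_nonpos_of_nonneg_of_nonpos (hc t) (hFU _ (hγΩ t (interior_subset ht)))

lemma mem_lyapunov_sublevel_of_hasDerivAt {γ : ℝ → E} {c : ℝ → ℝ} {a : ℝ} (hΩ : IsOpen Ω)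
    (hF : ∀ x ∈ Ω, DifferentiableAt ℝ F x) (hFU : ∀ x ∈ Ω, lineDeriv ℝ F x (U x) ≤ 0)
    (hK : IsClosed {x ∈ Ω | F x ≤ a}) (hc : ∀ t, 0 ≤ c t)
    (hγ : ∀ t, HasDerivAt γ (c t • U (γ t)) t) (hγ₀ : γ 0 ∈ {x ∈ Ω | F x ≤ a})
    {t : ℝ} (ht : 0 ≤ t) : γ t ∈ {x ∈ Ω | F x ≤ a} := by
  have hγc : Continuous γ := continuous_iff_continuousAt.2 fun t ↦ (hγ t).continuousAt
  refine IsClosed.Icc_subset_of_forall_mem_nhdsWithin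
    ((hK.preimage hγc).inter isClosed_Icc) hγ₀ ?_ (right_mem_Icc.2 ht)
  rintro s ⟨⟨hsΩ, hsa⟩, -⟩
  obtain ⟨r, hsr, hr⟩ := mem_nhdsGE_iff_exists_Ico_subset.1
    (mem_nhdsWithin_of_mem_nhds ((hΩ.preimage hγc).mem_nhds hsΩ) : γ ⁻¹' Ω ∈ 𝓝[≥] s)
  filter_upwards [Ioo_mem_nhdsGT hsr] with b hb
  have hsb : Icc s b ⊆ γ ⁻¹' Ω := (Icc_subset_Ico_right hb.2).trans hr
  exact ⟨hsb (right_mem_Icc.2 hb.1.le), hsa.trans' <|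
    lyapunov_le_of_hasDerivAt hF hFU hc hb.1.le hsb fun t _ ↦ hγ t⟩

theorem exists_unique_forward_solution_of_lyapunov [FiniteDimensional ℝ E] {x₀ : E}
    (hΩ : IsOpen Ω) (hU : ContDiffOn ℝ 1 U Ω)
    (hF : ∀ x ∈ Ω, DifferentiableAt ℝ F x) (hFU : ∀ x ∈ Ω, lineDeriv ℝ F x (U x) ≤ 0)
    (hx₀ : x₀ ∈ Ω) (hK : IsCompact {x ∈ Ω | F x ≤ F x₀}) :
    ∃ γ : ℝ → E, γ 0 = x₀ ∧ (∀ t, 0 ≤ t → γ t ∈ Ω ∧ HasDerivAt γ (U (γ t)) t) ∧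
      ∀ β : ℝ → E, β 0 = x₀ → (∀ t, 0 ≤ t → β t ∈ Ω ∧ HasDerivAt β (U (β t)) t) →
        ∀ t, 0 ≤ t → β t = γ t := by
  have := FiniteDimensional.complete ℝ E
  obtain ⟨f, hf₀, hf₁, hfU, hfc⟩ := exists_cutoff_smul_contDiff hΩ hK (sep_subset _ _) hU
  obtain ⟨k, hk⟩ := hfU.lipschitzWith_of_hasCompactSupport hfc one_ne_zero
  obtain ⟨γ, hγ₀, hγ⟩ := exists_isIntegralCurve_of_lipschitzWith hfU hk x₀
  have hγK (t : ℝ) (ht : 0 ≤ t) : γ t ∈ {x ∈ Ω | F x ≤ F x₀} :=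
    mem_lyapunov_sublevel_of_hasDerivAt hΩ hF hFU hK.isClosed (fun s ↦ hf₀ (γ s)) hγ
      ⟨hγ₀ ▸ hx₀, hγ₀ ▸ le_rfl⟩ ht
  refine ⟨γ, hγ₀, fun t ht ↦ ⟨(hγK t ht).1, by simpa [hf₁ _ (hγK t ht)] using hγ t⟩, ?_⟩
  intro β hβ₀ hβ t ht
  have hβK (s : ℝ) (hs : 0 ≤ s) : β s ∈ {x ∈ Ω | F x ≤ F x₀} := by
    refine ⟨(hβ s hs).1, hβ₀ ▸ ?_⟩
    exact lyapunov_le_of_hasDerivAt hF hFU (fun _ ↦ zero_le_one) hs (fun r hr ↦ (hβ r hr.1).1)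
      fun r hr ↦ by simpa only [one_smul] using (hβ r hr.1).2
  refine ODE_solution_unique (fun _ ↦ hk) (HasDerivAt.continuousOn fun s hs ↦ (hβ s hs.1).2)
    (fun s hs ↦ ?_) (HasDerivAt.continuousOn fun s _ ↦ hγ s) (fun s _ ↦ (hγ s).hasDerivWithinAt)
    (hβ₀.trans hγ₀.symm) (right_mem_Icc.2 ht)
  simpa [hf₁ _ (hβK s hs.1)] using (hβ s hs.1).2.hasDerivWithinAt

lemma isCompact_sublevel_of_subset_compact {X : Type*} [TopologicalSpace X] [T2Space X]
    {Ω S : Set X} {F : X → ℝ} {a : ℝ} (hS : IsCompact S) (hSΩ : S ⊆ Ω) (hF : ContinuousOn F S)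
    (hsub : {x ∈ Ω | F x ≤ a} ⊆ S) : IsCompact {x ∈ Ω | F x ≤ a} := by
  have heq : {x ∈ Ω | F x ≤ a} = S ∩ F ⁻¹' Iic a :=
    Subset.antisymm (fun x hx ↦ ⟨hsub hx, hx.2⟩) fun x hx ↦ ⟨hSΩ hx.1, hx.2⟩
  rw [heq]
  exact hS.of_isClosed_subset (hF.preimage_isClosed_of_isClosed hS.isClosed isClosed_Iic)
    inter_subset_left

end LyapunovFlow

lemma hasLineDerivAt_apply (u v : V → ℝ) (x : V) :
    HasLineDerivAt ℝ (fun u : V → ℝ ↦ u x) (v x) u v := by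
  simpa [HasLineDerivAt] using ((hasDerivAt_id (0 : ℝ)).mul_const (v x)).const_add (u x)

section FiniteMeasure

variable [Fintype V] {μ : V → ℝ}

lemma intV_mono (hμ : ∀ x, 0 ≤ μ x) {f g : V → ℝ} (hfg : ∀ x, f x ≤ g x) :
    intV μ f ≤ intV μ g :=
  sum_le_sum fun x _ ↦ mul_le_mul_of_nonneg_left (hfg x) (hμ x)

lemma intV_const (μ : V → ℝ) (c : ℝ) : intV μ (fun _ ↦ c) = volV μ * c :=
  (sum_mul ..).symm

lemma volV_pos [Nonempty V] (hμ : ∀ x, 0 < μ x) : 0 < volV μ :=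
  sum_pos (fun x _ ↦ hμ x) univ_nonempty

lemma mul_le_div_volV_mul_intV [Nonempty V] (hμ : ∀ x, 0 < μ x) {ρ : ℝ} (hρ : 0 ≤ ρ)
    {f : V → ℝ} {a : ℝ} (hf : ∀ x, a ≤ f x) : ρ * a ≤ ρ / volV μ * intV μ f := by
  have hle : volV μ * a ≤ intV μ f := by
    rw [← intV_const]
    exact intV_mono (fun x ↦ (hμ x).le) hf
  calc ρ * a = ρ / volV μ * (volV μ * a) := by field_simp [(volV_pos hμ).ne']
    _ ≤ ρ / volV μ * intV μ f := by
        have := volV_pos hμ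
        gcongr

/-- The integral `∫_V h e^u dμ`; for `h = 1` it is the mass of `e^u`. -/
noncomputable def expIntegral (μ h u : V → ℝ) : ℝ := intV μ fun x ↦ h x * exp (u x)

variable {h u : V → ℝ} {a b r : ℝ}

lemma abs_expIntegral_le (hμ : ∀ x, 0 ≤ μ x) (hu : ∀ x, u x ≤ b) :
    |expIntegral μ h u| ≤ intV μ (fun x ↦ |h x|) * exp b := by
  rw [intV, sum_mul]
  refine (abs_sum_le_sum_abs _ _).trans (sum_le_sum fun x _ ↦ ?_)
  rw [abs_mul, abs_mul, abs_of_nonneg (hμ x), abs_exp, ← mul_assoc]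
  gcongr
  · exact mul_nonneg (hμ x) (abs_nonneg _)
  · exact hu x

lemma log_expIntegral_le (hμ : ∀ x, 0 ≤ μ x) (hu : ∀ x, u x ≤ b) (hH : expIntegral μ h u ≠ 0) :
    log (expIntegral μ h u) ≤ log (intV μ fun x ↦ |h x|) + b := by
  have hle := abs_expIntegral_le (h := h) hμ hu
  have hne : intV μ (fun x ↦ |h x|) ≠ 0 := fun h0 ↦
    absurd (abs_pos.2 hH) (by simpa [h0] using hle)
  calc log (expIntegral μ h u) = log |expIntegral μ h u| := (log_abs _).symm
    _ ≤ log (intV μ (fun x ↦ |h x|) * exp b) := log_le_log (abs_pos.2 hH) hle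
    _ = log (intV μ fun x ↦ |h x|) + b := by rw [log_mul hne (exp_ne_zero b), log_exp]

lemma expIntegral_one_pos [Nonempty V] (hμ : ∀ x, 0 < μ x) (u : V → ℝ) :
    0 < expIntegral μ 1 u :=
  sum_pos (fun x _ ↦ mul_pos (hμ x) (by simp [exp_pos])) univ_nonempty

lemma log_volV_add_le_log_expIntegral_one [Nonempty V] (hμ : ∀ x, 0 < μ x)
    (hu : ∀ x, a ≤ u x) : log (volV μ) + a ≤ log (expIntegral μ 1 u) := by
  have hle : volV μ * exp a ≤ expIntegral μ 1 u := by
    rw [← intV_const]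
    exact intV_mono (fun x ↦ (hμ x).le) fun x ↦ by simpa using hu x
  rw [← log_exp a, ← log_mul (volV_pos hμ).ne' (exp_ne_zero a)]
  exact log_le_log (mul_pos (volV_pos hμ) (exp_pos a)) hle

lemma abs_sub_log_mean_exp_le [Nonempty V] (hμ : ∀ x, 0 < μ x)
    (hu : ∀ x y, |u x - u y| ≤ r) (x : V) :
    |u x - (log (expIntegral μ 1 u) - log (volV μ))| ≤ r := by
  have hlower := log_volV_add_le_log_expIntegral_one (a := u x - r) hμ fun y ↦
    sub_le_comm.1 (le_of_abs_le (hu x y))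
  have hupper := log_expIntegral_le (b := u x + r) (fun y ↦ (hμ y).le)
    (fun y ↦ sub_le_iff_le_add'.1 (le_of_abs_le (hu y x))) (expIntegral_one_pos hμ u).ne'
  simp only [Pi.one_apply, abs_one, intV_const, mul_one] at hupper
  rw [abs_le]
  constructor <;> linarith

lemma hasLineDerivAt_expIntegral (μ h u v : V → ℝ) :
    HasLineDerivAt ℝ (expIntegral μ h) (intV μ fun x ↦ h x * exp (u x) * v x) u v := by
  refine HasDerivAt.fun_sum fun x _ ↦ ?_
  simpa [mul_assoc] using ((hasLineDerivAt_apply u v x).exp.const_mul (h x)).const_mul (μ x)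

lemma contDiff_expIntegral (μ h : V → ℝ) : ContDiff ℝ 1 (expIntegral μ h) := by
  unfold expIntegral intV
  fun_prop

lemma isOpen_expIntegral_ne_zero (μ h : V → ℝ) : IsOpen {u | expIntegral μ h u ≠ 0} :=
  isOpen_ne_fun (contDiff_expIntegral μ h).continuous continuous_const

end FiniteMeasure

lemma mul_sub_sq_nonneg {W : V → V → ℝ} (hW : ∀ x y, x ≠ y → 0 ≤ W x y) (u : V → ℝ) (x y : V) :
    0 ≤ W x y * (u x - u y) ^ 2 := by
  rcases eq_or_ne x y with rfl | hxy
  · simp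
  · exact mul_nonneg (hW x y hxy) (sq_nonneg _)

section Dirichlet

variable [Fintype V] [DecidableEq V] {μ : V → ℝ} {W : V → V → ℝ}

lemma mul_opL {x : V} (hx : μ x ≠ 0) (W : V → V → ℝ) (u : V → ℝ) :
    μ x * opL μ W u x = ∑ y, W x y * (u x - u y) := by
  rw [opL, ← mul_assoc, mul_one_div_cancel hx, one_mul]
  exact sum_subset (filter_subset ..) fun y _ hy ↦ by simp_all

lemma mul_gradForm {x : V} (hx : μ x ≠ 0) (W : V → V → ℝ) (u v : V → ℝ) :
    μ x * gradForm μ W u v x = 1 / 2 * ∑ y, W x y * (u x - u y) * (v x - v y) := by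
  rw [gradForm, ← mul_assoc, show μ x * (1 / (2 * μ x)) = 1 / 2 by field_simp]
  congr 1
  exact sum_subset (filter_subset ..) fun y _ hy ↦ by simp_all

lemma intV_gradForm_eq_intV_opL_mul (hμ : ∀ x, μ x ≠ 0) (hW : ∀ x y, W x y = W y x)
    (u v : V → ℝ) : intV μ (gradForm μ W u v) = intV μ (fun x ↦ opL μ W u x * v x) := by
  have hswap : ∑ x, ∑ y, W x y * (u x - u y) * v y =
      -∑ x, ∑ y, W x y * (u x - u y) * v x := by
    rw [sum_comm, ← sum_neg_distrib]
    refine sum_congr rfl fun x _ ↦ ?_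
    rw [← sum_neg_distrib]
    exact sum_congr rfl fun y _ ↦ by rw [hW y x]; ring
  calc intV μ (gradForm μ W u v)
      = 1 / 2 * (∑ x, ∑ y, W x y * (u x - u y) * v x - ∑ x, ∑ y, W x y * (u x - u y) * v y) := by
        simp only [intV, mul_gradForm (hμ _), ← mul_sum, mul_sub, sum_sub_distrib]
    _ = ∑ x, ∑ y, W x y * (u x - u y) * v x := by rw [hswap]; ring
    _ = intV μ (fun x ↦ opL μ W u x * v x) := by
        simp only [intV, ← mul_assoc, mul_opL (hμ _), sum_mul]

lemma intV_opL (hμ : ∀ x, μ x ≠ 0) (hW : ∀ x y, W x y = W y x) (u : V → ℝ) :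
    intV μ (opL μ W u) = 0 := by
  simpa [intV, gradForm] using (intV_gradForm_eq_intV_opL_mul hμ hW u 1).symm

lemma hasLineDerivAt_intV_gradSq (μ : V → ℝ) (W : V → V → ℝ) (u v : V → ℝ) :
    HasLineDerivAt ℝ (fun u ↦ intV μ (gradSq μ W u)) (2 * intV μ (gradForm μ W u v)) u v := by
  rw [intV, mul_sum]
  refine HasDerivAt.fun_sum fun x _ ↦ ?_
  have hdiff (y : V) :
      HasDerivAt (fun t : ℝ ↦ (u + t • v) x - (u + t • v) y) (v x - v y) 0 := by
    exact (hasLineDerivAt_apply u v x).sub (hasLineDerivAt_apply u v y)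
  have hsum := HasDerivAt.fun_sum (u := univ.filter fun y ↦ y ≠ x) fun y _ ↦
    ((hdiff y).const_mul (W x y)).mul (hdiff y)
  refine ((hsum.const_mul (1 / (2 * μ x))).const_mul (μ x)).congr_deriv ?_
  simp only [gradForm, mul_sum]
  refine sum_congr rfl fun y _ ↦ ?_
  simp only [zero_smul, add_zero]
  ring

lemma two_mul_intV_gradSq (hμ : ∀ x, μ x ≠ 0) (W : V → V → ℝ) (u : V → ℝ) :
    2 * intV μ (gradSq μ W u) = ∑ x, ∑ y, W x y * (u x - u y) ^ 2 := by
  simp only [intV, gradSq, mul_gradForm (hμ _), ← mul_sum, sq, mul_assoc]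
  ring

lemma intV_gradSq_nonneg (hμ : ∀ x, μ x ≠ 0) (hW : ∀ x y, x ≠ y → 0 ≤ W x y) (u : V → ℝ) :
    0 ≤ intV μ (gradSq μ W u) := by
  refine nonneg_of_mul_nonneg_right ?_ (zero_lt_two' ℝ)
  rw [two_mul_intV_gradSq hμ]
  exact sum_nonneg fun x _ ↦ sum_nonneg fun y _ ↦ mul_sub_sq_nonneg hW u x y

lemma mul_sub_sq_le_intV_gradSq (hμ : ∀ x, μ x ≠ 0) (hW : ∀ x y, x ≠ y → 0 ≤ W x y)
    (u : V → ℝ) (x y : V) : W x y * (u x - u y) ^ 2 ≤ 2 * intV μ (gradSq μ W u) := by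
  rw [two_mul_intV_gradSq hμ, ← Fintype.sum_prod_type']
  exact single_le_sum (f := fun p : V × V ↦ W p.1 p.2 * (u p.1 - u p.2) ^ 2)
    (fun p _ ↦ mul_sub_sq_nonneg hW u p.1 p.2) (mem_univ (x, y))

lemma exists_abs_sub_le_sqrt_intV_gradSq (hμ : ∀ x, μ x ≠ 0) (hW : ∀ x y, x ≠ y → 0 < W x y) :
    ∃ κ > 0, ∀ u x y, |u x - u y| ≤ √(κ * intV μ (gradSq μ W u)) := by
  obtain ⟨c, hc⟩ := Finite.exists_le fun p : V × V ↦ (W p.1 p.2)⁻¹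
  refine ⟨2 * max c 1, by positivity, fun u x y ↦ abs_le_sqrt ?_⟩
  have hD := intV_gradSq_nonneg hμ (fun x y hxy ↦ (hW x y hxy).le) u
  rcases eq_or_ne x y with rfl | hxy
  · rw [sub_self, zero_pow two_ne_zero]
    positivity
  calc (u x - u y) ^ 2 = (W x y)⁻¹ * (W x y * (u x - u y) ^ 2) :=
        (inv_mul_cancel_left₀ (hW x y hxy).ne' _).symm
    _ ≤ max c 1 * (2 * intV μ (gradSq μ W u)) := by
        refine mul_le_mul ((hc (x, y)).trans (le_max_left c 1)) ?_ ?_ (by positivity)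
        · exact mul_sub_sq_le_intV_gradSq hμ (fun x y hxy ↦ (hW x y hxy).le) u x y
        · exact mul_sub_sq_nonneg (fun x y hxy ↦ (hW x y hxy).le) u x y
    _ = 2 * max c 1 * intV μ (gradSq μ W u) := by ring

lemma contDiff_opL (μ : V → ℝ) (W : V → V → ℝ) (x : V) : ContDiff ℝ 1 (opL μ W · x) := by
  unfold opL
  fun_prop

lemma contDiff_intV_gradSq (μ : V → ℝ) (W : V → V → ℝ) :
    ContDiff ℝ 1 fun u ↦ intV μ (gradSq μ W u) := by
  unfold intV gradSq gradForm
  fun_prop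

end Dirichlet

section MeanFieldFlow

variable [Fintype V] [DecidableEq V] {μ : V → ℝ} {W : V → V → ℝ} {ρ : ℝ} {h : V → ℝ}

/-- The right-hand side `−Lu + ρ (h e^u / ∫_V h e^u dμ − 1 / |V|)` of the mean field flow, that is
the velocity of `e^u`. -/
noncomputable def flowVelocity (μ : V → ℝ) (W : V → V → ℝ) (ρ : ℝ) (h u : V → ℝ) (x : V) : ℝ :=
  -opL μ W u x + ρ * (h x * exp (u x) / expIntegral μ h u - 1 / volV μ)

/-- The vector field on `V → ℝ` whose integral curves are the solutions `u` of the flow. -/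
noncomputable def flowField (μ : V → ℝ) (W : V → V → ℝ) (ρ : ℝ) (h u : V → ℝ) : V → ℝ :=
  fun x ↦ exp (-u x) * flowVelocity μ W ρ h u x

/-- The mean field functional
`J(u) = ½ ∫_V |∇u|² dμ + (ρ / |V|) ∫_V u dμ − ρ log |∫_V h e^u dμ|`, whose negative `L²(μ)`-gradient
is `flowVelocity`. The absolute value is built into `Real.log`, so that both signs of
`∫_V h e^u dμ` are covered. -/
noncomputable def flowEnergy (μ : V → ℝ) (W : V → V → ℝ) (ρ : ℝ) (h u : V → ℝ) : ℝ :=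
  intV μ (gradSq μ W u) / 2 + ρ / volV μ * intV μ u - ρ * log (expIntegral μ h u)

/-- The Lyapunov function `J(u) + (log ∫_V e^u dμ)²` of the flow. The second term, constant along
the flow, makes up for the invariance of `J` under the addition of constants. -/
noncomputable def flowLyapunov (μ : V → ℝ) (W : V → V → ℝ) (ρ : ℝ) (h u : V → ℝ) : ℝ :=
  flowEnergy μ W ρ h u + log (expIntegral μ 1 u) ^ 2

lemma intV_flowVelocity_mul (μ : V → ℝ) (W : V → V → ℝ) (ρ : ℝ) (h u v : V → ℝ) :
    intV μ (fun x ↦ flowVelocity μ W ρ h u x * v x) =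
      -intV μ (fun x ↦ opL μ W u x * v x) +
        ρ * (intV μ (fun x ↦ h x * exp (u x) * v x) / expIntegral μ h u -
          intV μ v / volV μ) := by
  simp only [intV, sum_div, ← sum_sub_distrib, mul_sum, ← sum_neg_distrib, ← sum_add_distrib]
  refine sum_congr rfl fun x _ ↦ ?_
  rw [flowVelocity]
  ring

lemma intV_flowVelocity [Nonempty V] (hμ : ∀ x, 0 < μ x) (hW : ∀ x y, W x y = W y x) (ρ : ℝ)
    {u : V → ℝ} (hH : expIntegral μ h u ≠ 0) : intV μ (flowVelocity μ W ρ h u) = 0 := by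
  have hopL := intV_opL (fun x ↦ (hμ x).ne') hW u
  have hmul := intV_flowVelocity_mul μ W ρ h u 1
  simp only [Pi.one_apply, mul_one] at hmul
  rw [hmul, hopL, ← expIntegral, div_self hH, show (1 : V → ℝ) = fun _ ↦ 1 from rfl, intV_const,
    mul_one, div_self (volV_pos hμ).ne']
  simp

lemma hasLineDerivAt_flowEnergy (hμ : ∀ x, μ x ≠ 0) (hW : ∀ x y, W x y = W y x) (ρ : ℝ)
    {u : V → ℝ} (hH : expIntegral μ h u ≠ 0) (v : V → ℝ) :
    HasLineDerivAt ℝ (flowEnergy μ W ρ h)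
      (-intV μ (fun x ↦ flowVelocity μ W ρ h u x * v x)) u v := by
  have hgrad := hasLineDerivAt_intV_gradSq μ W u v
  have hmean : HasLineDerivAt ℝ (intV μ) (intV μ v) u v :=
    HasDerivAt.fun_sum fun x _ ↦ (hasLineDerivAt_apply u v x).const_mul (μ x)
  have hlog := HasDerivAt.log (hasLineDerivAt_expIntegral μ h u v) (by simpa using hH)
  refine (((hgrad.div_const 2).add (hmean.const_mul (ρ / volV μ))).sub
    (hlog.const_mul ρ)).congr_deriv ?_
  rw [intV_gradForm_eq_intV_opL_mul hμ hW, intV_flowVelocity_mul, zero_smul, add_zero]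
  ring

lemma hasLineDerivAt_flowLyapunov_flowField [Nonempty V] (hμ : ∀ x, 0 < μ x)
    (hW : ∀ x y, W x y = W y x) (ρ : ℝ) {u : V → ℝ} (hH : expIntegral μ h u ≠ 0) :
    HasLineDerivAt ℝ (flowLyapunov μ W ρ h)
      (-intV μ fun x ↦ exp (-u x) * flowVelocity μ W ρ h u x ^ 2) u (flowField μ W ρ h u) := by
  have hmass : HasLineDerivAt ℝ (expIntegral μ 1) 0 u (flowField μ W ρ h u) := by
    simpa [flowField, ← mul_assoc, ← exp_add, intV_flowVelocity hμ hW ρ hH] using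
      hasLineDerivAt_expIntegral μ 1 u (flowField μ W ρ h u)
  have henergy :=
    hasLineDerivAt_flowEnergy (fun x ↦ (hμ x).ne') hW ρ hH (flowField μ W ρ h u)
  have hlog := HasDerivAt.log hmass (expIntegral_one_pos hμ _).ne'
  refine (henergy.add (hlog.pow 2)).congr_deriv ?_
  simp only [flowField, zero_div, mul_zero, add_zero, neg_inj]
  exact congrArg (intV μ) (funext fun x ↦ by ring)

lemma lineDeriv_flowLyapunov_flowField_nonpos [Nonempty V] (hμ : ∀ x, 0 < μ x)
    (hW : ∀ x y, W x y = W y x) (ρ : ℝ) {u : V → ℝ} (hH : expIntegral μ h u ≠ 0) :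
    lineDeriv ℝ (flowLyapunov μ W ρ h) u (flowField μ W ρ h u) ≤ 0 := by
  rw [(hasLineDerivAt_flowLyapunov_flowField hμ hW ρ hH).lineDeriv, neg_nonpos]
  exact sum_nonneg fun x _ ↦ mul_nonneg (hμ x).le (by positivity)

lemma exp_le_abs_expIntegral_of_flowEnergy_le [Nonempty V] (hμ : ∀ x, 0 < μ x)
    (hW : ∀ x y, x ≠ y → 0 ≤ W x y) (hρ : 0 < ρ) {u : V → ℝ} {a b : ℝ}
    (hH : expIntegral μ h u ≠ 0) (hu : ∀ x, b ≤ u x) (ha : flowEnergy μ W ρ h u ≤ a) :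
    exp (b - a / ρ) ≤ |expIntegral μ h u| := by
  rw [← le_log_iff_exp_le (abs_pos.2 hH), log_abs, sub_le_iff_le_add, ← sub_le_iff_le_add',
    le_div_iff₀' hρ]
  have hgrad := intV_gradSq_nonneg (fun x ↦ (hμ x).ne') hW u
  have hmean := mul_le_div_volV_mul_intV hμ hρ.le hu
  rw [flowEnergy] at ha
  linarith

lemma flowEnergy_ge [Nonempty V] (hμ : ∀ x, 0 < μ x) (hW : ∀ x y, x ≠ y → 0 ≤ W x y) (hρ : 0 ≤ ρ)
    {κ : ℝ} (hκ : 0 < κ) {u : V → ℝ} (hu : ∀ x y, |u x - u y| ≤ √(κ * intV μ (gradSq μ W u)))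
    (hH : expIntegral μ h u ≠ 0) :
    intV μ (gradSq μ W u) / 4 - (4 * ρ ^ 2 * κ + ρ * log (intV μ fun x ↦ |h x|)) ≤
      flowEnergy μ W ρ h u := by
  set D := intV μ (gradSq μ W u)
  set r := √(κ * D)
  have hD : 0 ≤ D := intV_gradSq_nonneg (fun x ↦ (hμ x).ne') hW u
  have hr : r ^ 2 = κ * D := sq_sqrt (mul_nonneg hκ.le hD)
  obtain ⟨x₀⟩ := ‹Nonempty V›
  have hmean := mul_le_div_volV_mul_intV (a := u x₀ - r) hμ hρ fun x ↦
    sub_le_comm.1 (le_of_abs_le (hu x₀ x))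
  have hlog := mul_le_mul_of_nonneg_left (log_expIntegral_le (b := u x₀ + r)
    (fun x ↦ (hμ x).le) (fun x ↦ sub_le_iff_le_add'.1 (le_of_abs_le (hu x x₀))) hH) hρ
  have hyoung : 2 * ρ * r ≤ D / 4 + 4 * ρ ^ 2 * κ := by
    refine le_of_mul_le_mul_left ?_ hκ
    linarith [sq_nonneg (2 * ρ * κ - r / 2)]
  rw [flowEnergy]
  linarith

lemma exists_abs_le_of_flowLyapunov_le [Nonempty V] (hμ : ∀ x, 0 < μ x)
    (hW : ∀ x y, x ≠ y → 0 < W x y) (hρ : 0 ≤ ρ) (h : V → ℝ) (a : ℝ) :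
    ∃ R, ∀ u, expIntegral μ h u ≠ 0 → flowLyapunov μ W ρ h u ≤ a → ∀ x, |u x| ≤ R := by
  have hW' : ∀ x y, x ≠ y → 0 ≤ W x y := fun x y hxy ↦ (hW x y hxy).le
  obtain ⟨κ, hκ, hosc⟩ := exists_abs_sub_le_sqrt_intV_gradSq (fun x ↦ (hμ x).ne') hW
  set C := a + (4 * ρ ^ 2 * κ + ρ * log (intV μ fun x ↦ |h x|))
  refine ⟨√(κ * (4 * C)) + √C + |log (volV μ)|, fun u hH hua x ↦ ?_⟩
  have hcoer : intV μ (gradSq μ W u) / 4 + log (expIntegral μ 1 u) ^ 2 ≤ C := by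
    have := flowEnergy_ge hμ hW' hρ hκ (hosc u) hH
    rw [flowLyapunov] at hua
    linarith
  have hmass : |log (expIntegral μ 1 u)| ≤ √C := by
    refine abs_le_sqrt ?_
    linarith [intV_gradSq_nonneg (fun x ↦ (hμ x).ne') hW' u]
  have hmean : |u x - (log (expIntegral μ 1 u) - log (volV μ))| ≤ √(κ * (4 * C)) := by
    refine abs_sub_log_mean_exp_le hμ (fun x y ↦ (hosc u x y).trans ?_) x
    gcongr
    linarith [sq_nonneg (log (expIntegral μ 1 u))]
  calc |u x| ≤ |u x - (log (expIntegral μ 1 u) - log (volV μ))| +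
        (|log (expIntegral μ 1 u)| + |log (volV μ)|) := by
          grw [← abs_sub, ← abs_add_le, sub_add_cancel]
    _ ≤ √(κ * (4 * C)) + √C + |log (volV μ)| := by linarith

lemma contDiffAt_flowField (μ : V → ℝ) (W : V → V → ℝ) (ρ : ℝ) {u : V → ℝ}
    (hH : expIntegral μ h u ≠ 0) : ContDiffAt ℝ 1 (flowField μ W ρ h) u := by
  refine contDiffAt_pi.2 fun x ↦ ?_
  have hH' := (contDiff_expIntegral μ h).contDiffAt (x := u)
  have hL := (contDiff_opL μ W x).contDiffAt (x := u)
  unfold flowField flowVelocity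
  fun_prop (disch := assumption)

lemma differentiableAt_flowLyapunov [Nonempty V] (hμ : ∀ x, 0 < μ x) (W : V → V → ℝ) (ρ : ℝ)
    {u : V → ℝ} (hH : expIntegral μ h u ≠ 0) : DifferentiableAt ℝ (flowLyapunov μ W ρ h) u := by
  have hH' := (contDiff_expIntegral μ h).contDiffAt (x := u) |>.differentiableAt one_ne_zero
  have hM' := (contDiff_expIntegral μ 1).contDiffAt (x := u) |>.differentiableAt one_ne_zero
  have hD := (contDiff_intV_gradSq μ W).contDiffAt (x := u) |>.differentiableAt one_ne_zero
  have hM := (expIntegral_one_pos hμ u).ne'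
  have hmean : DifferentiableAt ℝ (intV μ) u := by
    unfold intV
    fun_prop
  unfold flowLyapunov flowEnergy
  fun_prop (disch := assumption)

lemma isCompact_flowLyapunov_sublevel [Nonempty V] (hμ : ∀ x, 0 < μ x)
    (hW : ∀ x y, x ≠ y → 0 < W x y) (hρ : 0 < ρ) (h : V → ℝ) (a : ℝ) :
    IsCompact {u ∈ {u | expIntegral μ h u ≠ 0} | flowLyapunov μ W ρ h u ≤ a} := by
  obtain ⟨R, hR⟩ := exists_abs_le_of_flowLyapunov_le hμ hW hρ.le h a
  have hδ : {u | exp (-R - a / ρ) ≤ |expIntegral μ h u|} ⊆ {u | expIntegral μ h u ≠ 0} :=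
    fun u hu ↦ abs_pos.1 ((exp_pos _).trans_le hu)
  refine isCompact_sublevel_of_subset_compact
    (S := Set.univ.pi (fun _ ↦ Set.Icc (-R) R) ∩ {u | exp (-R - a / ρ) ≤ |expIntegral μ h u|})
    ((isCompact_univ_pi fun _ ↦ isCompact_Icc).inter_right <|
      isClosed_le continuous_const (contDiff_expIntegral μ h).continuous.abs)
    (Set.inter_subset_right.trans hδ) (fun u hu ↦
      (differentiableAt_flowLyapunov hμ W ρ (hδ hu.2)).continuousAt.continuousWithinAt) ?_
  rintro u ⟨hH, hua⟩
  have huR (x : V) : u x ∈ Set.Icc (-R) R := abs_le.1 (hR u hH hua x)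
  refine ⟨fun x _ ↦ huR x, exp_le_abs_expIntegral_of_flowEnergy_le hμ
    (fun x y hxy ↦ (hW x y hxy).le) hρ hH (fun x ↦ (huR x).1) (hua.trans' ?_)⟩
  exact le_add_of_nonneg_right (sq_nonneg _)

lemma hasDerivAt_flowField_iff {γ : ℝ → V → ℝ} {t : ℝ} :
    HasDerivAt γ (flowField μ W ρ h (γ t)) t ↔
      ∀ x, HasDerivAt (fun s ↦ exp (γ s x)) (flowVelocity μ W ρ h (γ t) x) t := by
  rw [hasDerivAt_pi]
  refine forall_congr' fun x ↦ ⟨fun hγ ↦ ?_, fun hγ ↦ ?_⟩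
  · simpa [flowField, ← mul_assoc, ← exp_add] using hγ.exp
  · simpa [flowField, exp_neg, div_eq_inv_mul] using hγ.log (exp_ne_zero _)

theorem first_flow_global_general (hμ : ∀ x, 0 < μ x) (hWsym : ∀ x y, W x y = W y x)
    (hWpos : ∀ x y, x ≠ y → 0 < W x y) (hρ : 0 < ρ) {u₀ : V → ℝ} (hu₀ : expIntegral μ h u₀ ≠ 0) :
    ∃ u : ℝ → V → ℝ,
      u 0 = u₀ ∧
      (∀ t ∈ Set.Ici (0 : ℝ), expIntegral μ h (u t) ≠ 0) ∧
      (∀ x, ∀ t ∈ Set.Ici (0 : ℝ),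
        HasDerivAt (fun s ↦ exp (u s x)) (flowVelocity μ W ρ h (u t) x) t) ∧
      ∀ v : ℝ → V → ℝ, v 0 = u₀ →
        (∀ t ∈ Set.Ici (0 : ℝ), expIntegral μ h (v t) ≠ 0) →
        (∀ x, ∀ t ∈ Set.Ici (0 : ℝ),
          HasDerivAt (fun s ↦ exp (v s x)) (flowVelocity μ W ρ h (v t) x) t) →
        ∀ t ∈ Set.Ici (0 : ℝ), v t = u t := by
  have : Nonempty V := univ_nonempty_iff.1 (nonempty_of_sum_ne_zero hu₀)
  obtain ⟨u, hu_zero, hu, huniq⟩ := exists_unique_forward_solution_of_lyapunov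
    (isOpen_expIntegral_ne_zero μ h)
    (fun w hw ↦ (contDiffAt_flowField μ W ρ hw).contDiffWithinAt)
    (fun w hw ↦ differentiableAt_flowLyapunov hμ W ρ hw)
    (fun w hw ↦ lineDeriv_flowLyapunov_flowField_nonpos hμ hWsym ρ hw) hu₀
    (isCompact_flowLyapunov_sublevel hμ hWpos hρ h (flowLyapunov μ W ρ h u₀))
  exact ⟨u, hu_zero, fun t ht ↦ (hu t ht).1,
    fun x t ht ↦ hasDerivAt_flowField_iff.1 (hu t ht).2 x, fun v hv_zero hv hv' ↦
      huniq v hv_zero fun t ht ↦ ⟨hv t ht, hasDerivAt_flowField_iff.2 fun x ↦ hv' x t ht⟩⟩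

end MeanFieldFlow

/-- (Global existence for the first flow) For `ρ > 0`, sign-changing `h` with `max h > 0`,
and initial datum with `∫_V h e^{u₀} dμ ≠ 0`, the first mean field flow has a unique global
solution on `[0, +∞)`. -/
theorem first_flow_global [Fintype V] [Nonempty V] [DecidableEq V]
    (μ : V → ℝ) (W : V → V → ℝ)
    (hμ : ∀ x, 0 < μ x)
    (hWsym : ∀ x y, W x y = W y x)
    (hWpos : ∀ x y, x ≠ y → 0 < W x y)
    (ρ : ℝ) (hρ : 0 < ρ)
    (h : V → ℝ) (hpos : ∃ x, 0 < h x) (hneg : ∃ x, h x < 0)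
    (u₀ : V → ℝ) (hu₀ : intV μ (fun x => h x * Real.exp (u₀ x)) ≠ 0) :
    ∃ u : ℝ → V → ℝ,
      (u 0 = u₀) ∧
      (∀ t ∈ Set.Ici (0 : ℝ), intV μ (fun y => h y * Real.exp (u t y)) ≠ 0) ∧
      (∀ x, ∀ t ∈ Set.Ici (0 : ℝ),
        HasDerivAt (fun s => Real.exp (u s x))
          (-(opL μ W (u t) x) +
            ρ * (h x * Real.exp (u t x) / intV μ (fun y => h y * Real.exp (u t y)) - 1 / volV μ))
          t) ∧
      (∀ v : ℝ → V → ℝ, v 0 = u₀ →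
        (∀ t ∈ Set.Ici (0 : ℝ), intV μ (fun y => h y * Real.exp (v t y)) ≠ 0) →
        (∀ x, ∀ t ∈ Set.Ici (0 : ℝ),
          HasDerivAt (fun s => Real.exp (v s x))
            (-(opL μ W (v t) x) +
              ρ * (h x * Real.exp (v t x) / intV μ (fun y => h y * Real.exp (v t y)) - 1 / volV μ))
            t) →
        ∀ t ∈ Set.Ici (0 : ℝ), v t = u t) :=
  first_flow_global_general hμ hWsym hWpos hρ hu₀
end

section
/- (Constraint preserved along the second flow) Let ρ > 0 and let h : V → ℝ change sign with max_{x∈V} h(x) > 0. If u : V × [0,T) → ℝ solves the second flow ∂_t u = α(t)h − R with ∫_V h e^{u(·,0)} dμ = 1, then ∫_V h e^{u(·,t)} dμ = 1 for all t ∈ [0,T). -/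
open Real Finset

variable {V : Type*}

/-- The scalar curvature type function `R = (1/ρ) e^{−u} (Lu + ρ/|V|)`. -/
noncomputable def Rcurv [Fintype V] [DecidableEq V] (μ : V → ℝ) (W : V → V → ℝ)
    (ρ : ℝ) (u : V → ℝ) (x : V) : ℝ :=
  (1 / ρ) * Real.exp (-(u x)) * (opL μ W u x + ρ / volV μ)

/-- The normalized coefficient `α = (∫_V h R e^u dμ) / (∫_V h² e^u dμ)`. -/
noncomputable def alphaC [Fintype V] [DecidableEq V] (μ : V → ℝ) (W : V → V → ℝ)
    (ρ : ℝ) (h : V → ℝ) (u : V → ℝ) : ℝ :=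
  intV μ (fun x => h x * Rcurv μ W ρ u x * Real.exp (u x)) /
    intV μ (fun x => (h x) ^ 2 * Real.exp (u x))

/-!
In the weighted space `L²(e^u dμ)` the coefficient `α` is exactly the one for which the velocity
`α h - R` is the orthogonal projection of `-R` onto the complement of `h`. Hence
`d/dt ∫_V h e^u dμ = ∫_V h e^u ∂_t u dμ = ⟨h, α h - R⟩ = 0`.
-/

section NormalizedFlow

variable [Fintype V] {μ h u : V → ℝ}

/-- The coefficient of `h` in the orthogonal projection of `R` onto `h` in `L²(e^u dμ)`. For
`R = Rcurv μ W ρ u` it is `alphaC μ W ρ h u`. -/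
noncomputable def normalizedCoeff (μ h R u : V → ℝ) : ℝ :=
  intV μ (fun x => h x * R x * Real.exp (u x)) / intV μ (fun x => (h x) ^ 2 * Real.exp (u x))

theorem hasDerivWithinAt_intV {f : ℝ → V → ℝ} {f' : V → ℝ} {I : Set ℝ} {t : ℝ}
    (hf : ∀ x, HasDerivWithinAt (fun s => f s x) (f' x) I t) :
    HasDerivWithinAt (fun s => intV μ (f s)) (intV μ f') I t :=
  HasDerivWithinAt.fun_sum fun x _ => (hf x).const_mul (μ x)

theorem mul_eq_zero_of_intV_sq_mul_exp_eq_zero (hμ : ∀ x, 0 ≤ μ x)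
    (hzero : intV μ (fun x => (h x) ^ 2 * Real.exp (u x)) = 0) (x : V) : μ x * h x = 0 := by
  have hterm : μ x * ((h x) ^ 2 * Real.exp (u x)) = 0 :=
    (Finset.sum_eq_zero_iff_of_nonneg fun y _ => mul_nonneg (hμ y) (by positivity)).mp hzero x
      (Finset.mem_univ x)
  simpa [(Real.exp_pos (u x)).ne'] using hterm

theorem normalizedCoeff_mul_intV (hμ : ∀ x, 0 ≤ μ x) (R : V → ℝ) :
    normalizedCoeff μ h R u * intV μ (fun x => (h x) ^ 2 * Real.exp (u x)) =
      intV μ (fun x => h x * R x * Real.exp (u x)) := by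
  -- If the denominator is `0`, then `h` vanishes `μ`-a.e., so the numerator is `0` too.
  refine div_mul_cancel_of_imp fun hzero => Finset.sum_eq_zero fun x _ => ?_
  have hx : μ x * h x = 0 := mul_eq_zero_of_intV_sq_mul_exp_eq_zero hμ hzero x
  calc μ x * (h x * R x * Real.exp (u x)) = μ x * h x * (R x * Real.exp (u x)) := by ring
    _ = 0 := by rw [hx, zero_mul]

theorem intV_mul_exp_mul_normalizedCoeff_sub_eq_zero (hμ : ∀ x, 0 ≤ μ x) (R : V → ℝ) :
    intV μ (fun x => h x * (Real.exp (u x) * (normalizedCoeff μ h R u * h x - R x))) = 0 :=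
  calc intV μ (fun x => h x * (Real.exp (u x) * (normalizedCoeff μ h R u * h x - R x)))
      = normalizedCoeff μ h R u * intV μ (fun x => (h x) ^ 2 * Real.exp (u x)) -
          intV μ (fun x => h x * R x * Real.exp (u x)) := by
        simp only [intV, Finset.mul_sum, ← Finset.sum_sub_distrib]
        exact Finset.sum_congr rfl fun x _ => by ring
    _ = 0 := sub_eq_zero.mpr (normalizedCoeff_mul_intV hμ R)

end NormalizedFlow

theorem second_flow_constraint_general [Fintype V] {μ h : V → ℝ} (hμ : ∀ x, 0 ≤ μ x)
    {R u : ℝ → V → ℝ} {I : Set ℝ} (hI : Convex ℝ I)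
    (hflow : ∀ x, ∀ t ∈ I, HasDerivWithinAt (fun s => u s x)
      (normalizedCoeff μ h (R t) (u t) * h x - R t x) I t)
    {t₀ t : ℝ} (ht₀ : t₀ ∈ I) (ht : t ∈ I) :
    intV μ (fun x => h x * Real.exp (u t x)) = intV μ (fun x => h x * Real.exp (u t₀ x)) := by
  have hderiv : ∀ s ∈ I,
      HasDerivWithinAt (fun r => intV μ (fun x => h x * Real.exp (u r x))) 0 I s := by
    intro s hs
    exact (hasDerivWithinAt_intV fun x => (hflow x s hs).exp.const_mul (h x)).congr_deriv
      (intV_mul_exp_mul_normalizedCoeff_sub_eq_zero hμ (R s))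
  have hbound := hI.norm_image_sub_le_of_norm_hasDerivWithin_le hderiv
    (fun _ _ => norm_zero.le) ht₀ ht
  rwa [zero_mul, norm_le_zero_iff, sub_eq_zero] at hbound

/-- (Constraint preserved along the second flow) If `∫_V h e^{u(·,0)} dμ = 1`, then
`∫_V h e^{u(·,t)} dμ = 1` for all `t ∈ [0,T)` along the second flow. -/
theorem second_flow_constraint [Fintype V] [Nonempty V] [DecidableEq V]
    (μ : V → ℝ) (W : V → V → ℝ)
    (hμ : ∀ x, 0 < μ x)
    (hWsym : ∀ x y, W x y = W y x)
    (hWpos : ∀ x y, x ≠ y → 0 < W x y)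
    (ρ : ℝ) (hρ : 0 < ρ)
    (h : V → ℝ) (hpos : ∃ x, 0 < h x) (hneg : ∃ x, h x < 0)
    (T : ℝ) (u : ℝ → V → ℝ)
    (hinit : intV μ (fun x => h x * Real.exp (u 0 x)) = 1)
    (hflow : ∀ x, ∀ t ∈ Set.Ico (0 : ℝ) T,
      HasDerivAt (fun s => u s x)
        (alphaC μ W ρ h (u t) * h x - Rcurv μ W ρ (u t) x) t) :
    ∀ t ∈ Set.Ico (0 : ℝ) T, intV μ (fun x => h x * Real.exp (u t x)) = 1 := by
  intro t ht
  have hzero : (0 : ℝ) ∈ Set.Ico 0 T := Set.left_mem_Ico.mpr (ht.1.trans_lt ht.2)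
  exact (second_flow_constraint_general (R := fun s => Rcurv μ W ρ (u s)) (fun x => (hμ x).le)
    (convex_Ico 0 T) (fun x s hs => (hflow x s hs).hasDerivWithinAt) hzero ht).trans hinit
end
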